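/- arXiv:2603.01681 — 6 statements merged into one kernel-verified Lean document; each statement's English description precedes it below -/
import Mathlib

section
/- Let H : ℝ^d → ℝ be convex and differentiable, let α > 1, and let C > 1 be a constant such that H(p) ≤ C|p|^α + C, ∇H(p)·p ≥ C⁻¹|p|^α − C, and H(p) ≥ −C for all p ∈ ℝ^d. Then there exists a constant C' > 1 such that for all p ∈ ℝ^d one has −H(p) + ∇H(p)·p ≥ C'⁻¹|p|^α − C' and H(p) ≥ −C'. -/
open scoped RealInnerProductSpace

/-- Proposition 2.2, implication (b ⇒ c): for a convex differentiable Hamiltonian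
`H : ℝ^d → ℝ` with `H p ≤ C ‖p‖^α + C`, `∇H(p)·p ≥ C⁻¹ ‖p‖^α - C` and
`H p ≥ -C`, there is `C' > 1` with `-H p + ∇H(p)·p ≥ C'⁻¹ ‖p‖^α - C'` and
`H p ≥ -C'` for all `p`. -/
theorem stmt_1 {d : ℕ} (H : EuclideanSpace ℝ (Fin d) → ℝ)
    (H' : EuclideanSpace ℝ (Fin d) → EuclideanSpace ℝ (Fin d))
    (hconv : ConvexOn ℝ Set.univ H)
    (hdiff : ∀ p, HasGradientAt H (H' p) p)
    (α C : ℝ) (hα : 1 < α) (hC : 1 < C)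
    (hub : ∀ p, H p ≤ C * ‖p‖ ^ α + C)
    (hlb : ∀ p, C⁻¹ * ‖p‖ ^ α - C ≤ ⟪H' p, p⟫)
    (hHlb : ∀ p, -C ≤ H p) :
    ∃ C' : ℝ, 1 < C' ∧
      ∀ p, C'⁻¹ * ‖p‖ ^ α - C' ≤ -H p + ⟪H' p, p⟫ ∧ -C' ≤ H p := by
  have key : ∀ p, ∀ s : ℝ, s < 1 → H p - H (s • p) ≤ (1 - s) * ⟪H' p, p⟫ := by
    intro p s hs1
    have hc : ConvexOn ℝ Set.univ (fun t : ℝ => H (t • p)) := by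
      have := hconv.comp_linearMap (LinearMap.toSpanSingleton ℝ (EuclideanSpace ℝ (Fin d)) p)
      simpa [Function.comp_def] using this
    have hd : HasDerivAt (fun t : ℝ => H (t • p)) ⟪H' p, p⟫ 1 := by
      have h1 : HasDerivAt (fun t : ℝ => t • p) p 1 := by
        simpa using (hasDerivAt_id (1 : ℝ)).smul_const p
      have h2 := (hdiff p).hasFDerivAt
      have h3 : HasFDerivAt H (InnerProductSpace.toDual ℝ _ (H' p)) ((1 : ℝ) • p) := by
        simpa using h2
      have := h3.comp_hasDerivAt (1 : ℝ) h1
      simpa [Function.comp_def] using this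
    have h := hc.slope_le_of_hasDerivAt (Set.mem_univ s) (Set.mem_univ 1) hs1 hd
    rw [slope_def_field, div_le_iff₀ (by linarith)] at h
    simp only [one_smul] at h
    linarith
  have hC0 : 0 < C := by linarith
  obtain ⟨s, hs0, hs1, hs⟩ : ∃ s : ℝ, 0 < s ∧ s < 1 ∧ C * s ^ α = s * C⁻¹ / 2 := by
    have hb : 0 < (2 * C ^ 2)⁻¹ := by positivity
    have hb1 : (2 * C ^ 2)⁻¹ < 1 := inv_lt_one_of_one_lt₀ (by nlinarith)
    have ha : 0 < α - 1 := by linarith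
    refine ⟨((2 * C ^ 2)⁻¹) ^ (α - 1)⁻¹, Real.rpow_pos_of_pos hb _,
      Real.rpow_lt_one hb.le hb1 (by positivity), ?_⟩
    set s := ((2 * C ^ 2)⁻¹) ^ (α - 1)⁻¹ with hsdef
    have hs0 : 0 < s := Real.rpow_pos_of_pos hb _
    have h1 : s ^ (α - 1) = (2 * C ^ 2)⁻¹ := Real.rpow_inv_rpow hb.le ha.ne'
    have h2 : s ^ α = s ^ (α - 1) * s := by
      rw [← Real.rpow_add_one hs0.ne']; simp
    rw [h2, h1]
    field_simp
  have hge : 2 * C ≤ 2 * C / s := by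
    rw [le_div_iff₀ hs0]; nlinarith
  refine ⟨2 * C / s, by linarith, fun p => ⟨?_, by linarith [hHlb p]⟩⟩
  have h1 := key p s hs1
  have h2 := hub (s • p)
  have h3 := mul_le_mul_of_nonneg_left (hlb p) hs0.le
  rw [norm_smul, Real.norm_of_nonneg hs0.le, Real.mul_rpow hs0.le (norm_nonneg p),
    ← mul_assoc, hs] at h2
  have h4 : (2 * C / s)⁻¹ * ‖p‖ ^ α = s * C⁻¹ / 2 * ‖p‖ ^ α := by
    field_simp
  rw [h4]
  have h5 : s * C ≤ C := by nlinarith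
  nlinarith
end

section
/- Let H : ℝ^d → ℝ be differentiable, let α > 1, and let C > 1 be a constant such that −H(p) + ∇H(p)·p ≥ C⁻¹|p|^α − C and H(p) ≥ −C for all p ∈ ℝ^d. Then there exists a constant C' > 1 such that H(p) ≥ C'⁻¹|p|^α − C' for all p ∈ ℝ^d. -/
open scoped RealInnerProductSpace

/-- Proposition 2.2, implication (c ⇒ a): for a differentiable Hamiltonian
`H : ℝ^d → ℝ` with `-H p + ∇H(p)·p ≥ C⁻¹ ‖p‖^α - C` and `H p ≥ -C`,
there is `C' > 1` with `H p ≥ C'⁻¹ ‖p‖^α - C'` for all `p`. -/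
theorem stmt_2 {d : ℕ} (H : EuclideanSpace ℝ (Fin d) → ℝ)
    (H' : EuclideanSpace ℝ (Fin d) → EuclideanSpace ℝ (Fin d))
    (hdiff : ∀ p, HasGradientAt H (H' p) p)
    (α C : ℝ) (hα : 1 < α) (hC : 1 < C)
    (hlb : ∀ p, C⁻¹ * ‖p‖ ^ α - C ≤ -H p + ⟪H' p, p⟫)
    (hHlb : ∀ p, -C ≤ H p) :
    ∃ C' : ℝ, 1 < C' ∧ ∀ p, C'⁻¹ * ‖p‖ ^ α - C' ≤ H p := by
  have h2 : (2:ℝ) ≤ 2 ^ α := by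
    have := Real.rpow_le_rpow_of_exponent_le (x := 2) (by norm_num) hα.le
    simpa using this
  have hC0 : 0 < C := by linarith
  refine ⟨2 * 2 ^ α * C, by nlinarith, fun p => ?_⟩
  have hder : ∀ t : ℝ, HasDerivAt (fun t : ℝ => H (t • p)) ⟪H' (t • p), p⟫ t := by
    intro t
    have h1 : HasDerivAt (fun t : ℝ => t • p) p t := by
      simpa using (hasDerivAt_id t).smul_const p
    have h3 := (hdiff (t • p)).hasFDerivAt.comp_hasDerivAt t h1
    simp only [InnerProductSpace.toDual_apply_apply] at h3
    exact h3
  obtain ⟨t, ⟨ht1, ht2⟩, ht⟩ := exists_hasDerivAt_eq_slope (fun t : ℝ => H (t • p))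
    (fun t : ℝ => ⟪H' (t • p), p⟫) (by norm_num : (1/2:ℝ) < 1)
    (fun t _ => (hder t).continuousAt.continuousWithinAt) (fun t _ => hder t)
  have ht0 : 0 < t := by linarith
  have e1 := hlb (t • p)
  have e2 := hHlb (t • p)
  have e3 := hHlb ((1/2:ℝ) • p)
  rw [inner_smul_right, norm_smul, Real.norm_of_nonneg ht0.le] at e1
  have e4 : (2 ^ α)⁻¹ * ‖p‖ ^ α ≤ (t * ‖p‖) ^ α := by
    rw [Real.mul_rpow ht0.le (norm_nonneg p), ← Real.inv_rpow (by norm_num)]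
    gcongr
    linarith
  have e5 : C⁻¹ * ((2 ^ α)⁻¹ * ‖p‖ ^ α) ≤ C⁻¹ * (t * ‖p‖) ^ α := by gcongr
  have e6 : (2 * 2 ^ α * C)⁻¹ * ‖p‖ ^ α = C⁻¹ * ((2 ^ α)⁻¹ * ‖p‖ ^ α) / 2 := by
    rw [mul_inv, mul_inv]; ring
  have e7 : 0 ≤ C⁻¹ * ((2 ^ α)⁻¹ * ‖p‖ ^ α) := by positivity
  rw [e6]
  set K := C⁻¹ * ((2 ^ α)⁻¹ * ‖p‖ ^ α)
  simp only [one_smul] at ht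
  rw [eq_div_iff (by norm_num)] at ht
  set D := ⟪H' (t • p), p⟫
  have e8 : K - 4 * C ≤ D := by
    have : t * (K - 4 * C) ≤ t * D := by nlinarith
    exact le_of_mul_le_mul_left this ht0
  nlinarith
end

section
/- Let α > 1 and β > 0, set γ := α(β+1)/β and γ' := γ/(γ−1), and let H : ℝ^d → ℝ be differentiable with |∇H(p)| ≤ C(|p|^{α−1} + 1) for all p ∈ ℝ^d, for some constant C > 1. For p₀, p₁ ∈ ℝ^d, m₀, m₁ ≥ 0 and θ ∈ [0,1] set p_θ = (1−θ)p₀ + θp₁ and m_θ = (1−θ)m₀ + θm₁. Then there exists a constant C' > 1, independent of p₀, p₁, m₀, m₁, θ, such that m_θ |∇H(p_θ)| ≤ C' ( θ^{min(γ−1,1)} (|p₁|^{γ−1} + m₁^{(β+1)/γ'}) + (1−θ)^{min(γ−1,1)} (|p₀|^{γ−1} + m₀^{(β+1)/γ'}) + 1 ). -/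
theorem aux_comb (r x y t : ℝ) (hr : 0 < r) (hx : 0 ≤ x) (hy : 0 ≤ y) (h0 : 0 ≤ t) (h1 : t ≤ 1) :
    ((1 - t) * x + t * y) ^ r ≤ (1 - t) ^ min r 1 * x ^ r + t ^ min r 1 * y ^ r := by
  have h1' : 0 ≤ 1 - t := by linarith
  rcases le_total 1 r with h | h
  · rw [min_eq_right h, Real.rpow_one, Real.rpow_one]
    have := (convexOn_rpow h).2 (Set.mem_Ici.2 hx) (Set.mem_Ici.2 hy) h1' h0 (by ring)
    simpa [smul_eq_mul] using this
  · rw [min_eq_left h, ← Real.mul_rpow h1' hx, ← Real.mul_rpow h0 hy]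
    exact Real.rpow_add_le_add_rpow (by positivity) (by positivity) hr.le h

theorem aux_pow (t s : ℝ) (h0 : 0 ≤ t) (h1 : t ≤ 1) (hs : 0 < s) (hs1 : s ≤ 1) : t ≤ t ^ s := by
  rcases h0.eq_or_lt with h | h
  · rw [← h, Real.zero_rpow hs.ne']
  · simpa using Real.rpow_le_rpow_of_exponent_ge h h1 hs1

/-- Lemma 2.12: convex combination bound on the transport flux `m ∇H`. With
`γ = α(β+1)/β`, `γ' = γ/(γ-1)` and `|∇H p| ≤ C(‖p‖^(α-1) + 1)`, there is `C' > 1`,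
independent of `p₀, p₁, m₀, m₁, θ`, such that
`m_θ |∇H p_θ| ≤ C' (θ^(min (γ-1) 1) (‖p₁‖^(γ-1) + m₁^((β+1)/γ')) + (1-θ)^(min (γ-1) 1) (‖p₀‖^(γ-1) + m₀^((β+1)/γ')) + 1)`. -/
theorem stmt_9 {d : ℕ} (α β γ γ' : ℝ) (hα : 1 < α) (hβ : 0 < β)
    (hγ : γ = α * (β + 1) / β) (hγ' : γ' = γ / (γ - 1))
    (H : EuclideanSpace ℝ (Fin d) → ℝ)
    (H' : EuclideanSpace ℝ (Fin d) → EuclideanSpace ℝ (Fin d))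
    (hdiff : ∀ p, HasGradientAt H (H' p) p)
    (C : ℝ) (hC : 1 < C)
    (hgrad : ∀ p, ‖H' p‖ ≤ C * (‖p‖ ^ (α - 1) + 1)) :
    ∃ C' : ℝ, 1 < C' ∧
      ∀ (p₀ p₁ : EuclideanSpace ℝ (Fin d)) (m₀ m₁ θ : ℝ),
        0 ≤ m₀ → 0 ≤ m₁ → 0 ≤ θ → θ ≤ 1 →
        ((1 - θ) * m₀ + θ * m₁) * ‖H' ((1 - θ) • p₀ + θ • p₁)‖ ≤
          C' * (θ ^ min (γ - 1) 1 * (‖p₁‖ ^ (γ - 1) + m₁ ^ ((β + 1) / γ')) +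
            (1 - θ) ^ min (γ - 1) 1 * (‖p₀‖ ^ (γ - 1) + m₀ ^ ((β + 1) / γ')) + 1) := by
  have hγ1 : 0 < γ - 1 := by
    have : γ - 1 = (α - 1) + α / β := by rw [hγ]; field_simp; ring
    rw [this]
    have : 0 < α / β := by positivity
    linarith
  have hγ0 : 0 < γ := by linarith
  have hα0 : 0 < α - 1 := by linarith
  have hlam : (β + 1) / γ' = 1 + β * (α - 1) / α := by
    have e : (β + 1) / γ' = (β + 1) - (β + 1) / γ := by
      rw [hγ']; field_simp
    have : (β + 1) / γ = β / α := by rw [hγ]; field_simp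
    rw [e, this]; field_simp; ring
  set L := (β + 1) / γ' with hL
  have hpos : 0 < β * (α - 1) / α := by positivity
  have hL1 : 1 < L := by linarith
  have hconj : L.HolderConjugate ((γ - 1) / (α - 1)) := by
    rw [Real.holderConjugate_iff]
    refine ⟨hL1, ?_⟩
    have e1 : L = (α * β + α - β) / α := by rw [hlam]; field_simp; ring
    have e2 : γ - 1 = (α * β + α - β) / β := by rw [hγ]; field_simp
    have hk : 0 < α * β + α - β := by nlinarith
    have hk' := hk.ne'
    rw [e1, e2, inv_div, div_div, inv_div, ← add_div, div_eq_one_iff_eq hk']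
    ring
  have hM1 : 1 < (γ - 1) / (α - 1) := hconj.symm.lt
  refine ⟨2 * C, by linarith, ?_⟩
  intro p₀ p₁ m₀ m₁ θ hm₀ hm₁ h0 h1
  have h1' : 0 ≤ 1 - θ := by linarith
  set s := min (γ - 1) 1 with hs
  have hs0 : 0 < s := lt_min hγ1 one_pos
  have hs1 : s ≤ 1 := min_le_right _ _
  set m := (1 - θ) * m₀ + θ * m₁ with hm
  set P := ‖(1 - θ) • p₀ + θ • p₁‖ with hP
  have hm0 : 0 ≤ m := by positivity
  have hP0 : 0 ≤ P := norm_nonneg _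
  have hPle : P ≤ (1 - θ) * ‖p₀‖ + θ * ‖p₁‖ := by
    refine (norm_add_le _ _).trans ?_
    rw [norm_smul, norm_smul, Real.norm_of_nonneg h0, Real.norm_of_nonneg h1']
  have hPr : P ^ (γ - 1) ≤ (1 - θ) ^ s * ‖p₀‖ ^ (γ - 1) + θ ^ s * ‖p₁‖ ^ (γ - 1) :=
    (Real.rpow_le_rpow hP0 hPle hγ1.le).trans
      (aux_comb _ _ _ _ hγ1 (norm_nonneg _) (norm_nonneg _) h0 h1)
  have hmr : m ^ L ≤ (1 - θ) ^ s * m₀ ^ L + θ ^ s * m₁ ^ L := by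
    have := aux_comb L m₀ m₁ θ (by linarith) hm₀ hm₁ h0 h1
    rw [min_eq_right hL1.le, Real.rpow_one, Real.rpow_one] at this
    refine this.trans ?_
    have a1 := aux_pow θ s h0 h1 hs0 hs1
    have a2 := aux_pow (1 - θ) s h1' (by linarith) hs0 hs1
    gcongr
  have hyoung : m * P ^ (α - 1) ≤ m ^ L + P ^ (γ - 1) := by
    have := Real.young_inequality_of_nonneg hm0 (Real.rpow_nonneg hP0 (α - 1)) hconj
    rw [← Real.rpow_mul hP0, mul_div_cancel₀ _ hα0.ne'] at this
    have b1 : m ^ L / L ≤ m ^ L := div_le_self (by positivity) hL1.le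
    have b2 := div_le_self (Real.rpow_nonneg hP0 (γ - 1)) hM1.le
    linarith
  have hm1 : m ≤ m ^ L + 1 := by
    rcases le_total m 1 with h | h
    · have : 0 ≤ m ^ L := by positivity
      linarith
    · have := Real.rpow_le_rpow_of_exponent_le h hL1.le
      rw [Real.rpow_one] at this
      linarith
  have hPn : 0 ≤ P ^ (γ - 1) := by positivity
  calc m * ‖H' ((1 - θ) • p₀ + θ • p₁)‖ ≤ m * (C * (P ^ (α - 1) + 1)) :=
        mul_le_mul_of_nonneg_left (hgrad _) hm0
    _ = C * (m * P ^ (α - 1) + m) := by ring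
    _ ≤ C * (2 * (θ ^ s * (‖p₁‖ ^ (γ - 1) + m₁ ^ L) +
            (1 - θ) ^ s * (‖p₀‖ ^ (γ - 1) + m₀ ^ L) + 1)) :=
        mul_le_mul_of_nonneg_left (by linarith) (by linarith)
    _ = _ := by ring
end

section
/- Let α > 1 and β > 0, set γ := α(β+1)/β, let g : [0,∞) → ℝ be continuous and strictly increasing with C⁻¹ m^β − C ≤ g(m) ≤ C m^β + C for all m ≥ 0adelphia, with extended inverse g⁻¹, and let H : ℝ^d → ℝ be differentiable with |∇H(p)| ≤ C(|p|^{α−1} + 1), H(p) ≤ C|p|^α + C and H(p) ≥ C⁻¹|p|^α − C for all p ∈ ℝ^d, for some constant C > 1. For p₀, p₁ ∈ ℝ^d and θ ∈ [0,1] set p_θ = (1−θ)p₀ + θp₁. Then there exists a constant C' > 1, independent of p₀, p₁, θ, such that g⁻¹(H(p_θ)) · |∇H(p_θ)| ≤ C' ( θ^{min(γ−1,1)} |p₁|^{γ−1} + (1−θ)^{min(γ−1,1)} |p₀|^{γ−1} + 1 ). -/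
theorem conv_aux (s : ℝ) (hs : 0 < s) (a b θ : ℝ) (ha : 0 ≤ a) (hb : 0 ≤ b) (h0 : 0 ≤ θ)
    (h1 : θ ≤ 1) :
    ((1 - θ) * a + θ * b) ^ s ≤ θ ^ min s 1 * b ^ s + (1 - θ) ^ min s 1 * a ^ s := by
  have h1' : 0 ≤ 1 - θ := by linarith
  rcases le_total s 1 with h | h
  · rw [min_eq_left h]
    have := Real.rpow_add_le_add_rpow (mul_nonneg h1' ha) (mul_nonneg h0 hb) hs.le h
    rw [Real.mul_rpow h1' ha, Real.mul_rpow h0 hb] at this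
    linarith
  · rw [min_eq_right h, Real.rpow_one, Real.rpow_one]
    have := (convexOn_rpow h).2 (Set.mem_Ici.2 ha) (Set.mem_Ici.2 hb) h1' h0 (by ring)
    simp only [smul_eq_mul] at this
    linarith

/-- Lemma 2.13: composite convex combination bound on `g⁻¹(H(p_θ)) |∇H(p_θ)|`.
With `γ = α(β+1)/β`, `g` continuous, strictly increasing, of polynomial growth with
extended inverse `ginv`, and `H` differentiable with the stated growth and coercivity
bounds, there is `C' > 1`, independent of `p₀, p₁, θ`, such that
`ginv (H p_θ) * |∇H p_θ| ≤ C' (θ^(min (γ-1) 1) ‖p₁‖^(γ-1) + (1-θ)^(min (γ-1) 1) ‖p₀‖^(γ-1) + 1)`. -/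
theorem stmt_10 {d : ℕ} (α β γ : ℝ) (hα : 1 < α) (hβ : 0 < β)
    (hγ : γ = α * (β + 1) / β)
    (g : ℝ → ℝ)
    (hcont : ContinuousOn g (Set.Ici 0))
    (hmono : StrictMonoOn g (Set.Ici 0))
    (C : ℝ) (hC : 1 < C)
    (hbound : ∀ m : ℝ, 0 ≤ m → C⁻¹ * m ^ β - C ≤ g m ∧ g m ≤ C * m ^ β + C)
    (ginv : ℝ → ℝ)
    (hginv_nonneg : ∀ z : ℝ, 0 ≤ ginv z)
    (hginv_inv : ∀ z : ℝ, g 0 ≤ z → g (ginv z) = z)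
    (hginv_zero : ∀ z : ℝ, z < g 0 → ginv z = 0)
    (H : EuclideanSpace ℝ (Fin d) → ℝ)
    (H' : EuclideanSpace ℝ (Fin d) → EuclideanSpace ℝ (Fin d))
    (hdiff : ∀ p, HasGradientAt H (H' p) p)
    (hgrad : ∀ p, ‖H' p‖ ≤ C * (‖p‖ ^ (α - 1) + 1))
    (hub : ∀ p, H p ≤ C * ‖p‖ ^ α + C)
    (hlb : ∀ p, C⁻¹ * ‖p‖ ^ α - C ≤ H p) :
    ∃ C' : ℝ, 1 < C' ∧
      ∀ (p₀ p₁ : EuclideanSpace ℝ (Fin d)) (θ : ℝ), 0 ≤ θ → θ ≤ 1 →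
        ginv (H ((1 - θ) • p₀ + θ • p₁)) * ‖H' ((1 - θ) • p₀ + θ • p₁)‖ ≤
          C' * (θ ^ min (γ - 1) 1 * ‖p₁‖ ^ (γ - 1) +
            (1 - θ) ^ min (γ - 1) 1 * ‖p₀‖ ^ (γ - 1) + 1) := by
  have hC0 : 0 < C := by linarith
  have hs : γ - 1 = α / β + (α - 1) := by rw [hγ]; field_simp; ring
  have hs0 : 0 < γ - 1 := by
    rw [hs]
    have : 0 < α / β := div_pos (by linarith) hβ
    linarith
  have hm : ∀ p, ginv (H p) ≤ (3 * C ^ 2) ^ (1 / β) * (max 1 ‖p‖) ^ (α / β) := by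
    intro p
    have hM : 1 ≤ max 1 ‖p‖ := le_max_left _ _
    have hM0 : 0 ≤ max 1 ‖p‖ := by linarith
    rcases lt_or_ge (H p) (g 0) with h | h
    · rw [hginv_zero _ h]; positivity
    · have h1 := (hbound _ (hginv_nonneg (H p))).1
      rw [hginv_inv _ h] at h1
      have h2 := hub p
      have h3 : ‖p‖ ^ α ≤ (max 1 ‖p‖) ^ α :=
        Real.rpow_le_rpow (norm_nonneg _) (le_max_right _ _) (by linarith)
      have h4 : 1 ≤ (max 1 ‖p‖) ^ α := Real.one_le_rpow hM (by linarith)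
      have h5 : C⁻¹ * ginv (H p) ^ β ≤ 3 * C * (max 1 ‖p‖) ^ α := by nlinarith
      have h6 : ginv (H p) ^ β ≤ 3 * C ^ 2 * (max 1 ‖p‖) ^ α := by
        rw [inv_mul_le_iff₀ hC0] at h5
        linarith
      have h7 := Real.rpow_le_rpow (Real.rpow_nonneg (hginv_nonneg (H p)) β) h6
        (by positivity : 0 ≤ 1 / β)
      rw [← Real.rpow_mul (hginv_nonneg _), mul_one_div_cancel hβ.ne', Real.rpow_one,
        Real.mul_rpow (by positivity) (by positivity), ← Real.rpow_mul hM0, mul_one_div] at h7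
      exact h7
  have hg : ∀ p, ‖H' p‖ ≤ 2 * C * (max 1 ‖p‖) ^ (α - 1) := by
    intro p
    have h3 : ‖p‖ ^ (α - 1) ≤ (max 1 ‖p‖) ^ (α - 1) :=
      Real.rpow_le_rpow (norm_nonneg _) (le_max_right _ _) (by linarith)
    have h4 : 1 ≤ (max 1 ‖p‖) ^ (α - 1) := Real.one_le_rpow (le_max_left _ _) (by linarith)
    have := hgrad p
    nlinarith
  have hK : 0 < (3 * C ^ 2) ^ (1 / β) * (2 * C) := by positivity
  generalize hKK : (3 * C ^ 2) ^ (1 / β) * (2 * C) = K at hK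
  have hall : ∀ p, ginv (H p) * ‖H' p‖ ≤ K * (‖p‖ ^ (γ - 1) + 1) := by
    intro p
    have hM : 0 < max 1 ‖p‖ := lt_of_lt_of_le one_pos (le_max_left _ _)
    calc ginv (H p) * ‖H' p‖ ≤ ((3 * C ^ 2) ^ (1 / β) * (max 1 ‖p‖) ^ (α / β)) *
          (2 * C * (max 1 ‖p‖) ^ (α - 1)) :=
          mul_le_mul (hm p) (hg p) (norm_nonneg _) (by positivity)
      _ = K * (max 1 ‖p‖) ^ (γ - 1) := by rw [hs, Real.rpow_add hM, ← hKK]; ring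
      _ ≤ K * (‖p‖ ^ (γ - 1) + 1) := by
          apply mul_le_mul_of_nonneg_left _ hK.le
          rcases max_choice 1 ‖p‖ with h | h
          · rw [h, Real.one_rpow]
            linarith [Real.rpow_nonneg (norm_nonneg p) (γ - 1)]
          · rw [h]; linarith
  refine ⟨K + 1, by linarith, fun p₀ p₁ θ h0 h1 => ?_⟩
  have h1' : 0 ≤ 1 - θ := by linarith
  refine (hall _).trans ?_
  have hn : ‖(1 - θ) • p₀ + θ • p₁‖ ≤ (1 - θ) * ‖p₀‖ + θ * ‖p₁‖ := by
    refine (norm_add_le _ _).trans ?_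
    rw [norm_smul, norm_smul, Real.norm_of_nonneg h0, Real.norm_of_nonneg h1']
  have h2 := (Real.rpow_le_rpow (norm_nonneg _) hn hs0.le).trans
    (conv_aux (γ - 1) hs0 _ _ θ (norm_nonneg p₀) (norm_nonneg p₁) h0 h1)
  apply mul_le_mul (by linarith) (by linarith) (by positivity) (by linarith)
end

section
/- Let (Γ, 𝒜, μ) be a measure space with 0 < μ(Γ) < ∞, let γ > 1, let u : Γ → ℝ be measurable with ∫ |u|^γ dμ < ∞, and let J > 0. Then there exists a unique κ ∈ ℝ such that ∫_Γ (max(u + κ, 0))^{γ−1} dμ = J. -/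
open MeasureTheory

/-- Lemma 5.4 (choice of the compatible representative): on a measure space with
`0 < μ(Γ) < ∞`, for `γ > 1`, `u` measurable with `∫ |u|^γ dμ < ∞` and `J > 0`,
there is a unique `κ ∈ ℝ` with `∫ (u + κ)₊^(γ-1) dμ = J`. -/
theorem stmt_16 {Γ : Type*} [MeasurableSpace Γ] (μ : Measure Γ)
    (hμpos : 0 < μ Set.univ) (hμfin : μ Set.univ < ⊤)
    (γ : ℝ) (hγ : 1 < γ)
    (u : Γ → ℝ) (hu_meas : Measurable u)
    (hu_int : Integrable (fun x => |u x| ^ γ) μ)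
    (J : ℝ) (hJ : 0 < J) :
    ∃! κ : ℝ, ∫ x, (max (u x + κ) 0) ^ (γ - 1) ∂μ = J := by
  haveI : IsFiniteMeasure μ := ⟨hμfin⟩
  obtain ⟨p, hp⟩ : ∃ p, p = γ - 1 := ⟨_, rfl⟩
  have hp0 : 0 < p := by linarith
  rw [← hp]
  have hmeas : ∀ κ : ℝ, Measurable (fun x => (max (u x + κ) 0) ^ p) := fun κ =>
    ((hu_meas.add_const κ).max measurable_const).pow_const p
  have hnn : ∀ κ x, 0 ≤ (max (u x + κ) 0) ^ p := fun κ x =>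
    Real.rpow_nonneg (le_max_right _ _) _
  have hmono : ∀ {a b : ℝ} (x : Γ), a ≤ b → (max (u x + a) 0) ^ p ≤ (max (u x + b) 0) ^ p := by
    intro a b x hab
    apply Real.rpow_le_rpow (le_max_right _ _) _ hp0.le
    exact max_le_max (by linarith) le_rfl
  have hint : ∀ κ : ℝ, Integrable (fun x => (max (u x + κ) 0) ^ p) μ := by
    intro κ
    have hb : Integrable (fun x => (2:ℝ) ^ p * ((1 + |u x| ^ γ) + |κ| ^ p)) μ :=
      (((integrable_const (1:ℝ)).add hu_int).add (integrable_const _)).const_mul _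
    refine hb.mono' (hmeas κ).aestronglyMeasurable (Filter.Eventually.of_forall fun x => ?_)
    rw [Real.norm_of_nonneg (hnn κ x)]
    have h1 : |u x| ^ p ≤ 1 + |u x| ^ γ := by
      have h0 : 0 ≤ |u x| ^ γ := Real.rpow_nonneg (abs_nonneg _) _
      rcases le_total (|u x|) 1 with h | h
      · have := Real.rpow_le_one (abs_nonneg (u x)) h hp0.le
        linarith
      · have := Real.rpow_le_rpow_of_exponent_le h (show p ≤ γ by linarith)
        linarith
    have h2 : 0 ≤ |u x| ^ p := Real.rpow_nonneg (abs_nonneg _) _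
    have h3 : 0 ≤ |κ| ^ p := Real.rpow_nonneg (abs_nonneg _) _
    have h4 : max (u x + κ) 0 ≤ 2 * max |u x| |κ| := by
      have a1 := le_max_left |u x| |κ|
      have a2 := le_max_right |u x| |κ|
      have a3 := le_abs_self (u x)
      have a4 := le_abs_self κ
      have a5 := abs_nonneg κ
      apply max_le <;> linarith
    calc (max (u x + κ) 0) ^ p ≤ (2 * max |u x| |κ|) ^ p :=
          Real.rpow_le_rpow (le_max_right _ _) h4 hp0.le
      _ = 2 ^ p * (max |u x| |κ|) ^ p :=
          Real.mul_rpow (by norm_num) (le_max_of_le_left (abs_nonneg _))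
      _ ≤ _ := by
          apply mul_le_mul_of_nonneg_left _ (Real.rpow_nonneg (by norm_num) _)
          rcases max_choice |u x| |κ| with h | h <;> rw [h] <;> linarith
  have hcont : Continuous (fun κ : ℝ => ∫ x, (max (u x + κ) 0) ^ p ∂μ) := by
    rw [continuous_iff_continuousAt]
    intro κ
    refine continuousAt_of_dominated (bound := fun x => (max (u x + (κ + 1)) 0) ^ p)
      (Filter.Eventually.of_forall fun k => (hmeas k).aestronglyMeasurable) ?_ (hint _) ?_
    · filter_upwards [Iio_mem_nhds (show κ < κ + 1 by linarith)] with k hk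
      refine Filter.Eventually.of_forall fun x => ?_
      rw [Real.norm_of_nonneg (hnn k x)]
      exact hmono x (le_of_lt hk)
    · refine Filter.Eventually.of_forall fun x => ?_
      apply Continuous.continuousAt
      exact ((continuous_const.add continuous_id).max continuous_const).rpow_const
        (fun _ => Or.inr hp0.le)
  have hlow : ∃ κ : ℝ, ∫ x, (max (u x + κ) 0) ^ p ∂μ ≤ J := by
    have ht : Filter.Tendsto (fun κ : ℝ => ∫ x, (max (u x + κ) 0) ^ p ∂μ) Filter.atBot
        (nhds (∫ _, (0:ℝ) ∂μ)) := by
      refine tendsto_integral_filter_of_dominated_convergence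
        (fun x => (max (u x + 0) 0) ^ p)
        (Filter.Eventually.of_forall fun k => (hmeas k).aestronglyMeasurable) ?_ (hint _) ?_
      · filter_upwards [Filter.eventually_le_atBot (0:ℝ)] with k hk
        refine Filter.Eventually.of_forall fun x => ?_
        rw [Real.norm_of_nonneg (hnn k x)]
        exact hmono x hk
      · refine Filter.Eventually.of_forall fun x => ?_
        apply tendsto_const_nhds.congr'
        filter_upwards [Filter.eventually_le_atBot (-u x)] with k hk
        rw [max_eq_right (by linarith), Real.zero_rpow hp0.ne']
    rw [integral_zero] at ht
    obtain ⟨κ, hκ⟩ := (ht.eventually (Iio_mem_nhds hJ)).exists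
    exact ⟨κ, le_of_lt hκ⟩
  have hhigh : ∃ κ : ℝ, J ≤ ∫ x, (max (u x + κ) 0) ^ p ∂μ := by
    obtain ⟨n, hn⟩ : ∃ n : ℕ, 0 < μ {x | -(n:ℝ) ≤ u x} := by
      by_contra! hcon
      have : μ (⋃ n : ℕ, {x | -(n:ℝ) ≤ u x}) = 0 :=
        measure_iUnion_null fun n => le_antisymm (hcon n) zero_le
      have hU : (⋃ n : ℕ, {x | -(n:ℝ) ≤ u x}) = Set.univ := by
        ext x
        obtain ⟨n, hn⟩ := exists_nat_ge (-u x)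
        simp only [Set.mem_iUnion, Set.mem_setOf_eq, Set.mem_univ, iff_true]
        exact ⟨n, by linarith⟩
      rw [hU] at this
      exact hμpos.ne' this
    have hA : MeasurableSet {x | -(n:ℝ) ≤ u x} := measurableSet_le measurable_const hu_meas
    have hm : 0 < μ.real {x | -(n:ℝ) ≤ u x} :=
      ENNReal.toReal_pos hn.ne' (measure_ne_top _ _)
    set m := μ.real {x | -(n:ℝ) ≤ u x} with hmdef
    set t : ℝ := (J / m) ^ (1 / p) with htdef
    have hJm : 0 ≤ J / m := (div_pos hJ hm).le
    have ht0 : 0 ≤ t := Real.rpow_nonneg hJm _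
    have htp : t ^ p = J / m := by
      rw [htdef, ← Real.rpow_mul hJm, one_div_mul_cancel hp0.ne', Real.rpow_one]
    refine ⟨n + t, ?_⟩
    calc J = ∫ x, Set.indicator {x | -(n:ℝ) ≤ u x} (fun _ => J / m) x ∂μ := by
          rw [integral_indicator_const _ hA, smul_eq_mul, ← hmdef]
          field_simp
      _ ≤ _ := by
          refine integral_mono ((integrable_const _).indicator hA) (hint _) fun x => ?_
          by_cases hx : x ∈ {x | -(n:ℝ) ≤ u x}
          · rw [Set.indicator_of_mem hx, ← htp]
            apply Real.rpow_le_rpow ht0 _ hp0.le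
            have : -(n:ℝ) ≤ u x := hx
            exact le_max_of_le_left (by linarith)
          · rw [Set.indicator_of_notMem hx]
            exact hnn _ x
  have huniq : ∀ a b : ℝ, a < b → ∫ x, (max (u x + a) 0) ^ p ∂μ = J →
      ∫ x, (max (u x + b) 0) ^ p ∂μ = J → False := by
    intro a b hab ha hb
    have hd : ∫ x, ((max (u x + b) 0) ^ p - (max (u x + a) 0) ^ p) ∂μ = 0 := by
      rw [integral_sub (hint b) (hint a), ha, hb, sub_self]
    rw [integral_eq_zero_iff_of_nonneg (fun x => sub_nonneg.2 (hmono x hab.le))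
      ((hint b).sub (hint a))] at hd
    have hz : ∫ x, (max (u x + a) 0) ^ p ∂μ = 0 := by
      apply integral_eq_zero_of_ae
      filter_upwards [hd] with x hx
      simp only [Pi.zero_apply] at hx ⊢
      rcases le_or_gt (u x + a) 0 with h | h
      · rw [max_eq_right h, Real.zero_rpow hp0.ne']
      · exfalso
        have : (max (u x + a) 0) ^ p < (max (u x + b) 0) ^ p := by
          apply Real.rpow_lt_rpow (le_max_right _ _) _ hp0
          rw [max_eq_left h.le, max_eq_left (by linarith)]
          linarith
        linarith
    linarith
  obtain ⟨κ, hκ⟩ := mem_range_of_exists_le_of_exists_ge hcont hlow hhigh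
  refine ⟨κ, hκ, fun y hy => ?_⟩
  rcases lt_trichotomy y κ with h | h | h
  · exact (huniq _ _ h hy hκ).elim
  · exact h
  · exact (huniq _ _ h hκ hy).elim
end

section
/- Let (Γ, 𝒜, μ) be a measure space with 0 < μ(Γ) < ∞, let γ > 1, let u₀, u₁ : Γ → ℝ be measurable with ∫ |u₀|^γ dμ < ∞ and ∫ |u₁|^γ dμ < ∞, and let J > 0. For θ ∈ [0,1] set u_θ := (1−θ)u₀ + θu₁, and let κ_θ be the unique real number with ∫_Γ (max(u_θ + κ_θ, 0))^{γ−1} dμ = J. Then the map θ ↦ κ_θ is continuous on [0,1]. -/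
open MeasureTheory

lemma aux_memLp {Γ : Type*} [MeasurableSpace Γ] (μ : Measure Γ) (γ : ℝ) (hγ : 1 < γ)
    (u : Γ → ℝ) (hu : Measurable u) (hi : Integrable (fun x => |u x| ^ γ) μ) :
    MemLp u (ENNReal.ofReal γ) μ := by
  have h0 : ENNReal.ofReal γ ≠ 0 := by
    simp only [ne_eq, ENNReal.ofReal_eq_zero, not_le]; linarith
  rw [← integrable_norm_rpow_iff hu.aestronglyMeasurable h0 ENNReal.ofReal_ne_top,
    ENNReal.toReal_ofReal (by linarith)]
  simpa [Real.norm_eq_abs] using hi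

/-- Lemma 5.6 (continuity of the compatibility constant): with `u₀, u₁ ∈ L^γ(μ)`,
`u_θ := (1-θ)u₀ + θu₁`, and `κ θ` the unique real with
`∫ (u_θ + κ θ)₊^(γ-1) dμ = J`, the map `θ ↦ κ θ` is continuous on `[0,1]`. -/
theorem stmt_17 {Γ : Type*} [MeasurableSpace Γ] (μ : Measure Γ)
    (hμpos : 0 < μ Set.univ) (hμfin : μ Set.univ < ⊤)
    (γ : ℝ) (hγ : 1 < γ)
    (u₀ u₁ : Γ → ℝ) (hu₀_meas : Measurable u₀) (hu₁_meas : Measurable u₁)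
    (hu₀_int : Integrable (fun x => |u₀ x| ^ γ) μ)
    (hu₁_int : Integrable (fun x => |u₁ x| ^ γ) μ)
    (J : ℝ) (hJ : 0 < J)
    (κ : ℝ → ℝ)
    (hκ : ∀ θ ∈ Set.Icc (0 : ℝ) 1,
      ∫ x, (max ((1 - θ) * u₀ x + θ * u₁ x + κ θ) 0) ^ (γ - 1) ∂μ = J) :
    ContinuousOn κ (Set.Icc (0 : ℝ) 1) := by
  haveI : IsFiniteMeasure μ := ⟨hμfin⟩
  have hg1 : 0 < γ - 1 := by linarith
  set F : ℝ → ℝ → Γ → ℝ := fun c θ x =>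
    (max ((1 - θ) * u₀ x + θ * u₁ x + c) 0) ^ (γ - 1) with hF
  set B : ℝ → Γ → ℝ := fun c x => (1 + |u₀ x| + |u₁ x| + |c|) ^ γ with hB
  have hFmeas : ∀ c θ, AEStronglyMeasurable (F c θ) μ := fun c θ => by
    apply Measurable.aestronglyMeasurable
    simp only [hF]; fun_prop
  have hFnn : ∀ c θ x, 0 ≤ F c θ x := fun c θ x => by simp only [hF]; positivity
  have hBint : ∀ c, Integrable (B c) μ := by
    intro c
    have m0 := (aux_memLp μ γ hγ u₀ hu₀_meas hu₀_int).norm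
    have m1 := (aux_memLp μ γ hγ u₁ hu₁_meas hu₁_int).norm
    have m := ((((memLp_const (μ := μ) (p := ENNReal.ofReal γ) (1:ℝ)).add m0).add m1).add
      (memLp_const |c|)).integrable_norm_rpow' 
    rw [ENNReal.toReal_ofReal (by linarith)] at m
    refine m.congr (Filter.Eventually.of_forall fun x => ?_)
    simp only [hB, Pi.add_apply, Real.norm_eq_abs]
    rw [abs_of_nonneg (by positivity)]
  have hbound : ∀ c, ∀ θ ∈ Set.Icc (0:ℝ) 1, ∀ x, ‖F c θ x‖ ≤ B c x := by
    rintro c θ ⟨h0, h1⟩ x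
    rw [Real.norm_eq_abs, abs_of_nonneg (hFnn c θ x)]
    simp only [hF, hB]
    have e0 : (1 - θ) * u₀ x ≤ |u₀ x| := by
      nlinarith [le_abs_self (u₀ x), abs_nonneg (u₀ x)]
    have e1 : θ * u₁ x ≤ |u₁ x| := by
      nlinarith [le_abs_self (u₁ x), abs_nonneg (u₁ x)]
    have p0 := abs_nonneg (u₀ x)
    have p1 := abs_nonneg (u₁ x)
    have p2 := abs_nonneg c
    calc _ ≤ (1 + |u₀ x| + |u₁ x| + |c|) ^ (γ - 1) := by
          apply Real.rpow_le_rpow (le_max_right _ _) _ hg1.le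
          apply max_le
          · linarith [le_abs_self c]
          · positivity
      _ ≤ _ := Real.rpow_le_rpow_of_exponent_le (by linarith) (by linarith)
  have hFint : ∀ c, ∀ θ ∈ Set.Icc (0:ℝ) 1, Integrable (F c θ) μ := fun c θ hθ =>
    (hBint c).mono' (hFmeas c θ) (Filter.Eventually.of_forall (hbound c θ hθ))
  have hmonoF : ∀ θ a b, a ≤ b → ∀ x, F a θ x ≤ F b θ x := by
    intro θ a b hab x
    simp only [hF]
    exact Real.rpow_le_rpow (le_max_right _ _) (max_le_max (by linarith) le_rfl) hg1.le
  have hmono : ∀ θ ∈ Set.Icc (0:ℝ) 1, ∀ a b, a ≤ b → ∫ x, F a θ x ∂μ ≤ ∫ x, F b θ x ∂μ :=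
    fun θ hθ a b hab => integral_mono (hFint a θ hθ) (hFint b θ hθ) (hmonoF θ a b hab)
  have hstrict : ∀ θ ∈ Set.Icc (0:ℝ) 1, ∀ a b, a < b → 0 < ∫ x, F b θ x ∂μ →
      ∫ x, F a θ x ∂μ < ∫ x, F b θ x ∂μ := by
    intro θ hθ a b hab hpos
    refine lt_of_le_of_ne (hmono θ hθ a b hab.le) fun heq => ?_
    have hae := (integral_eq_iff_of_ae_le (hFint a θ hθ) (hFint b θ hθ)
      (Filter.Eventually.of_forall (hmonoF θ a b hab.le))).1 heq
    have hz : ∫ x, F b θ x ∂μ = 0 := by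
      apply integral_eq_zero_of_ae
      filter_upwards [hae] with x hx
      simp only [hF, Pi.zero_apply] at hx ⊢
      by_cases hc : (1 - θ) * u₀ x + θ * u₁ x + b ≤ 0
      · rw [max_eq_right hc, Real.zero_rpow hg1.ne']
      · push Not at hc
        exact absurd hx (Real.rpow_lt_rpow (le_max_right _ _)
          (max_lt (lt_max_of_lt_left (by linarith)) (lt_max_of_lt_left hc)) hg1).ne
    linarith
  have hcont : ∀ c, ContinuousOn (fun θ => ∫ x, F c θ x ∂μ) (Set.Icc (0:ℝ) 1) := by
    intro c
    refine continuousOn_of_dominated (bound := B c) (fun θ _ => hFmeas c θ)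
      (fun θ hθ => Filter.Eventually.of_forall (hbound c θ hθ)) (hBint c)
      (Filter.Eventually.of_forall fun x => ?_)
    apply Continuous.continuousOn
    simp only [hF]
    exact Continuous.rpow_const (by fun_prop) (fun _ => Or.inr hg1.le)
  have hκ' : ∀ θ ∈ Set.Icc (0 : ℝ) 1, ∫ x, F (κ θ) θ x ∂μ = J := hκ
  intro θ₀ hθ₀
  refine tendsto_order.2 ⟨fun a ha => ?_, fun b hb => ?_⟩
  · have h := hstrict θ₀ hθ₀ a _ ha (by rw [hκ' _ hθ₀]; exact hJ)
    rw [hκ' _ hθ₀] at h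
    filter_upwards [(hcont a θ₀ hθ₀).eventually_lt_const h, self_mem_nhdsWithin] with θ h1 h2
    by_contra hc
    push Not at hc
    have := hmono θ h2 _ _ hc
    rw [hκ' _ h2] at this
    linarith
  · have h := hstrict θ₀ hθ₀ _ b hb (by
      have := hmono θ₀ hθ₀ _ _ hb.le
      rw [hκ' _ hθ₀] at this
      linarith)
    rw [hκ' _ hθ₀] at h
    filter_upwards [(hcont b θ₀ hθ₀).eventually_const_lt h, self_mem_nhdsWithin] with θ h1 h2
    by_contra hc
    push Not at hc
    have := hmono θ h2 _ _ hc
    rw [hκ' _ h2] at this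
    linarith
end
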